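/- Let Ω ⊂ ℝⁿ be open, 1 < p < ∞, 1 ≤ q ≤ p, a > 1, and Φ : [0,∞) → [0,∞) an increasing convex function with Φ(0) = 0. Then there exists a constant c(a,p,q) such that for every compactly supported Lipschitz function φ on Ω, with M_t = {|φ| > t}: ∫_0^∞ Φ(t^p cap_{p,q}(closure(M_{at}), M_t)) dt/t ≤ Φ(c(a,p,q) ‖∇φ‖_{L^{p,q}(Ω, mₙ; ℝⁿ)}^p) · log a. In particular Φ^{-1} of the left side is bounded by c(a,p,q)‖∇φ‖_{L^{p,q}}^p. -/

import Mathlib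

open MeasureTheory Set
open scoped ENNReal

/-- The distribution function `μ_{[f]}(s) = μ({|f| > s})`. -/
noncomputable def distribFn {α : Type*} [MeasurableSpace α] (μ : Measure α)
    (f : α → ℝ) (s : ℝ) : ℝ≥0∞ :=
  μ {x | s < |f x|}

/-- The Lorentz `p,q`-(quasi)norm, `1 < p < ∞`, `1 ≤ q ≤ ∞`, expressed through the
distribution function. -/
noncomputable def lorentzNorm {α : Type*} [MeasurableSpace α] (μ : Measure α)
    (p : ℝ) (q : ℝ≥0∞) (f : α → ℝ) : ℝ≥0∞ :=
  if q = ⊤ then ⨆ s : Ioi (0 : ℝ), ENNReal.ofReal s.1 * distribFn μ f s.1 ^ (1 / p)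
  else (ENNReal.ofReal p *
      ∫⁻ s in Ioi (0 : ℝ),
        ENNReal.ofReal (s ^ (q.toReal - 1)) * distribFn μ f s ^ (q.toReal / p)) ^ (1 / q.toReal)

/-- Admissible functions for the conductor `(K, Ω)`: Lipschitz, compactly supported
in `Ω`, and `≥ 1` in a neighborhood of `K`. -/
def admissible {n : ℕ} (K Ω : Set (Fin n → ℝ)) : Set ((Fin n → ℝ) → ℝ) :=
  {u | (∃ c, LipschitzWith c u) ∧ HasCompactSupport u ∧ tsupport u ⊆ Ω ∧
    K ⊆ interior {x | 1 ≤ u x}}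

/-- The Sobolev–Lorentz `p,q`-capacitance of the conductor `(K, Ω)`:
`cap_{p,q}(K, Ω) = inf { ‖∇u‖_{L^{p,q}(Ω, mₙ; ℝⁿ)}^p : u ∈ W(K, Ω) }`. -/
noncomputable def capacitance (n : ℕ) (p : ℝ) (q : ℝ≥0∞)
    (K Ω : Set (Fin n → ℝ)) : ℝ≥0∞ :=
  ⨅ u ∈ admissible K Ω,
    lorentzNorm (volume.restrict Ω) p q (fun x => ‖fderiv ℝ u x‖) ^ p

/-!
A piecewise linear cutoff of `|φ|` is a test function for the conductor between `M_{at}` and `M_t`,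
and its gradient lives on the layer `{t < |φ| < at}`. Hence `t ^ p * cap_{p,q}` is at most
`(a - 1) ^ (-p)` times the `p`-th power of the Lorentz norm of `∇φ` on that layer. For `q ≤ p`,
Minkowski's inequality with exponent `p / q` makes `A ↦ ‖∇φ‖_{L^{p,q}(A)} ^ p` superadditive over
disjoint sets, and the layers at the levels `a ^ k * t`, `k ∈ ℤ`, are disjoint, so the sum over `k`
of these bounds is controlled by the full norm, uniformly in `t`. A convex `Φ` with `Φ 0 = 0` is
superadditive, which moves `Φ` outside the sum. Finally `dt / t` is invariant under dilations: the
integral over `(0, ∞)` folds into an integral over `[1, a)` of the sum over `k`, and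
`∫_1^a dt / t = log a`.
-/

open Filter Topology
open scoped NNReal

section Superadditive

variable {Φ : ℝ → ℝ}

theorem add_le_map_add_of_convexOn (hΦ : ConvexOn ℝ (Ici 0) Φ) (hΦ0 : Φ 0 = 0) :
    ∀ x ∈ Ici (0 : ℝ), ∀ y ∈ Ici (0 : ℝ), Φ x + Φ y ≤ Φ (x + y) := by
  intro x (hx : 0 ≤ x) y (hy : 0 ≤ y)
  rcases (add_nonneg hx hy).eq_or_lt with hxy | hxy
  · obtain ⟨rfl, rfl⟩ := (add_eq_zero_iff_of_nonneg hx hy).1 hxy.symm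
    simp [hΦ0]
  have chord : ∀ z, 0 ≤ z → z ≤ x + y → Φ z ≤ z / (x + y) * Φ (x + y) := by
    intro z hz hzxy
    have h := hΦ.2 self_mem_Ici hxy.le (sub_nonneg.2 ((div_le_one hxy).2 hzxy))
      (div_nonneg hz hxy.le) (sub_add_cancel _ _)
    simpa only [smul_eq_mul, mul_zero, zero_add, hΦ0, div_mul_cancel₀ _ hxy.ne'] using h
  calc Φ x + Φ y ≤ x / (x + y) * Φ (x + y) + y / (x + y) * Φ (x + y) :=
        add_le_add (chord x hx (by linarith)) (chord y hy (by linarith))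
    _ = Φ (x + y) := by rw [← add_mul, ← add_div, div_self hxy.ne', one_mul]

variable (hnonneg : ∀ x ∈ Ici (0 : ℝ), 0 ≤ Φ x)
  (hadd : ∀ x ∈ Ici (0 : ℝ), ∀ y ∈ Ici (0 : ℝ), Φ x + Φ y ≤ Φ (x + y))
include hnonneg hadd

theorem monotoneOn_of_superadditive : MonotoneOn Φ (Ici 0) := by
  intro x hx y _ hxy
  have hyx : y - x ∈ Ici (0 : ℝ) := sub_nonneg.2 hxy
  have h := hadd x hx _ hyx
  rw [add_sub_cancel] at h
  linarith [hnonneg _ hyx]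

theorem sum_map_le_map_sum_of_superadditive {ι : Type*} (s : Finset ι) {F : ι → ℝ}
    (hF : ∀ i, 0 ≤ F i) : ∑ i ∈ s, Φ (F i) ≤ Φ (∑ i ∈ s, F i) := by
  classical
  induction s using Finset.induction_on with
  | empty => simpa using hnonneg 0 self_mem_Ici
  | insert i s hi ih =>
    rw [Finset.sum_insert hi, Finset.sum_insert hi]
    exact (add_le_add_right ih _).trans
      (hadd _ (hF i) _ (Finset.sum_nonneg fun j _ => hF j))

end Superadditive

section Lintegral

variable {α ι : Type*} [MeasurableSpace α]

theorem sum_lintegral_le_lintegral_sum (μ : Measure α) (s : Finset ι) (g : ι → α → ℝ≥0∞) :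
    ∑ i ∈ s, ∫⁻ x, g i x ∂μ ≤ ∫⁻ x, ∑ i ∈ s, g i x ∂μ := by
  classical
  induction s using Finset.induction_on with
  | empty => simp
  | insert i s hi ih =>
    simp only [Finset.sum_insert hi]
    exact (add_le_add_right ih _).trans (le_lintegral_add _ _)

theorem le_rpow_of_le_rpow_mul {r r' : ℝ} (hr : r.HolderConjugate r') {x y : ℝ≥0∞} (hx : x ≠ ⊤)
    (h : x ≤ x ^ (1 / r') * y) : x ≤ y ^ r := by
  rcases eq_or_ne x 0 with rfl | hx0
  · exact zero_le
  have hpow0 : x ^ (1 / r') ≠ 0 := by simp [ENNReal.rpow_eq_zero_iff, hx0, hx]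
  have hpow : x ^ (1 / r') ≠ ⊤ := ENNReal.rpow_ne_top_of_nonneg hr.symm.one_div_nonneg hx
  have hsplit : x = x ^ (1 / r') * x ^ (1 / r) := by
    rw [← ENNReal.rpow_add _ _ hx0 hx, one_div, one_div, hr.symm.inv_add_inv_eq_one,
      ENNReal.rpow_one]
  have hroot : x ^ (1 / r) ≤ y := by
    rwa [← ENNReal.mul_le_mul_iff_right hpow0 hpow, ← hsplit]
  rwa [one_div, ENNReal.rpow_inv_le_iff hr.pos] at hroot

/-- Minkowski's integral inequality, by duality: with `G i = ∫⁻ x, g i x ∂μ`, the sum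
`∑ i, G i ^ r = ∑ i, G i ^ (r - 1) * G i` is bounded by Hölder's inequality under the integral. -/
theorem sum_lintegral_rpow_le (μ : Measure α) (s : Finset ι) (g : ι → α → ℝ≥0∞) {r : ℝ}
    (hr : 1 ≤ r) :
    ∑ i ∈ s, (∫⁻ x, g i x ∂μ) ^ r ≤ (∫⁻ x, (∑ i ∈ s, g i x ^ r) ^ (1 / r) ∂μ) ^ r := by
  rcases hr.eq_or_lt with rfl | hr1
  · simpa using sum_lintegral_le_lintegral_sum μ s g
  have hr0 : 0 < r := one_pos.trans hr1
  have hconj := Real.HolderConjugate.conjExponent hr1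
  set r' := r.conjExponent
  set G : ι → ℝ≥0∞ := fun i => ∫⁻ x, g i x ∂μ
  set H : ℝ≥0∞ := ∫⁻ x, (∑ i ∈ s, g i x ^ r) ^ (1 / r) ∂μ
  rcases eq_or_ne H ⊤ with hH | hH
  · simp [hH, ENNReal.top_rpow_of_pos hr0]
  have hG : ∀ i ∈ s, G i ≠ ⊤ := fun i hi => ne_top_of_le_ne_top hH <| lintegral_mono fun x => by
    rw [one_div, ENNReal.le_rpow_inv_iff hr0]
    exact Finset.single_le_sum (f := fun i => g i x ^ r) (fun _ _ => zero_le) hi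
  set S : ℝ≥0∞ := ∑ i ∈ s, G i ^ r
  have hS : S ≠ ⊤ := ENNReal.sum_ne_top.2 fun i hi => ENNReal.rpow_ne_top_of_nonneg hr0.le (hG i hi)
  have hpow : ∀ y : ℝ≥0∞, y ^ r = y ^ (r - 1) * y := fun y => by
    conv_lhs => rw [← sub_add_cancel r 1, ENNReal.rpow_add_of_nonneg _ _ (by linarith) zero_le_one,
      ENNReal.rpow_one]
  have hoelder : ∀ x, ∑ i ∈ s, G i ^ (r - 1) * g i x ≤
      S ^ (1 / r') * (∑ i ∈ s, g i x ^ r) ^ (1 / r) := fun x => by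
    simpa only [← ENNReal.rpow_mul, hconj.sub_one_mul_conj] using
      ENNReal.inner_le_Lp_mul_Lq s (fun i => G i ^ (r - 1)) (fun i => g i x) hconj.symm
  refine le_rpow_of_le_rpow_mul hconj hS ?_
  calc S = ∑ i ∈ s, ∫⁻ x, G i ^ (r - 1) * g i x ∂μ := Finset.sum_congr rfl fun i hi => by
        rw [lintegral_const_mul' _ _ (ENNReal.rpow_ne_top_of_nonneg (by linarith) (hG i hi)), hpow]
    _ ≤ ∫⁻ x, ∑ i ∈ s, G i ^ (r - 1) * g i x ∂μ := sum_lintegral_le_lintegral_sum μ s _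
    _ ≤ ∫⁻ x, S ^ (1 / r') * (∑ i ∈ s, g i x ^ r) ^ (1 / r) ∂μ := lintegral_mono hoelder
    _ = S ^ (1 / r') * H := lintegral_const_mul' _ _
        (ENNReal.rpow_ne_top_of_nonneg hconj.symm.one_div_nonneg hS)

theorem setLIntegral_image_const_mul {c : ℝ} (hc : 0 < c) {s : Set ℝ} (hs : MeasurableSet s)
    (H : ℝ → ℝ≥0∞) :
    ∫⁻ t in (c * ·) '' s, H t = ∫⁻ t in s, ENNReal.ofReal c * H (c * t) := by
  simpa only [abs_of_pos hc, mul_one, id_eq] using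
    lintegral_image_eq_lintegral_abs_deriv_mul hs
      (fun x _ => ((hasDerivAt_id x).const_mul c).hasDerivWithinAt)
      (mul_right_injective₀ hc.ne').injOn H

theorem setLIntegral_Ico_one_ofReal_div {a : ℝ} (ha : 1 ≤ a) {C : ℝ} (hC : 0 ≤ C) :
    ∫⁻ t in Ico 1 a, ENNReal.ofReal (C / t) = ENNReal.ofReal (C * Real.log a) := by
  rw [← ofReal_integral_eq_lintegral_ofReal]
  · simp_rw [integral_Ico_eq_integral_Ioc, ← intervalIntegral.integral_of_le ha, div_eq_mul_inv]
    rw [intervalIntegral.integral_const_mul, integral_inv_of_pos one_pos (by linarith), div_one]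
  · have hcont : ContinuousOn (fun t : ℝ => C / t) (Icc 1 a) :=
      continuousOn_const.div continuousOn_id fun t ht => (one_pos.trans_le ht.1).ne'
    exact (hcont.integrableOn_compact isCompact_Icc).mono_set Ico_subset_Icc_self
  · filter_upwards [ae_restrict_mem measurableSet_Ico] with t ht
    exact div_nonneg hC (zero_le_one.trans ht.1)

theorem setLIntegral_Ioi_zero_le_tsum_zpow {a : ℝ} (ha : 1 < a) (H : ℝ → ℝ≥0∞) :
    ∫⁻ t in Ioi (0 : ℝ), H t ≤
      ∑' k : ℤ, ∫⁻ t in Ico 1 a, ENNReal.ofReal (a ^ k) * H (a ^ k * t) := by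
  have ha0 : 0 < a := one_pos.trans ha
  have hcover : Ioi (0 : ℝ) ⊆ ⋃ k : ℤ, (a ^ k * ·) '' Ico 1 a := by
    intro t ht
    obtain ⟨k, hk⟩ := exists_mem_Ico_zpow ht ha
    refine mem_iUnion.2 ⟨k, ?_⟩
    rwa [image_mul_left_Ico (zpow_pos ha0 k), mul_one, ← zpow_add_one₀ ha0.ne']
  calc ∫⁻ t in Ioi (0 : ℝ), H t ≤ ∫⁻ t in ⋃ k : ℤ, (a ^ k * ·) '' Ico 1 a, H t :=
        lintegral_mono_set hcover
    _ ≤ ∑' k : ℤ, ∫⁻ t in (a ^ k * ·) '' Ico 1 a, H t := lintegral_iUnion_le _ _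
    _ = _ := tsum_congr fun k =>
        setLIntegral_image_const_mul (zpow_pos ha0 k) measurableSet_Ico H

theorem lintegral_ofReal_div_le_of_sum_zpow_le {a : ℝ} (ha : 1 < a) {G : ℝ → ℝ}
    (hG : ∀ t, 0 < t → 0 ≤ G t) {B : ℝ}
    (hB : ∀ t, 0 < t → ∀ s : Finset ℤ, ∑ k ∈ s, G (a ^ k * t) ≤ B) :
    ∫⁻ t in Ioi (0 : ℝ), ENNReal.ofReal (G t / t) ≤ ENNReal.ofReal (B * Real.log a) := by
  have hpow : ∀ k : ℤ, 0 < a ^ k := zpow_pos (one_pos.trans ha)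
  have hscale : ∀ k : ℤ, ∀ t, ENNReal.ofReal (a ^ k) * ENNReal.ofReal (G (a ^ k * t) / (a ^ k * t))
      = ENNReal.ofReal (G (a ^ k * t) / t) := fun k t => by
    rw [← ENNReal.ofReal_mul (hpow k).le, mul_div_assoc', mul_div_mul_left _ _ (hpow k).ne']
  refine (setLIntegral_Ioi_zero_le_tsum_zpow ha _).trans ?_
  rw [ENNReal.tsum_eq_iSup_sum,
    ← setLIntegral_Ico_one_ofReal_div ha.le (by simpa using hB 1 one_pos ∅)]
  refine iSup_le fun s => (sum_lintegral_le_lintegral_sum _ s _).trans <|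
    setLIntegral_mono' measurableSet_Ico fun t ht => ?_
  have ht0 : 0 < t := one_pos.trans_le ht.1
  simp only [hscale]
  rw [← ENNReal.ofReal_sum_of_nonneg fun k _ =>
    div_nonneg (hG _ (mul_pos (hpow k) ht0)) ht0.le, ← Finset.sum_div]
  gcongr
  exact hB t ht0 s

end Lintegral

section LorentzNorm

variable {α : Type*} [MeasurableSpace α] {μ ν : Measure α} {p q : ℝ} {f g : α → ℝ}

theorem lorentzNorm_le_of_distribFn_le (hp : 0 ≤ p) {q : ℝ≥0∞}
    (h : ∀ s, 0 < s → distribFn μ f s ≤ distribFn ν g s) :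
    lorentzNorm μ p q f ≤ lorentzNorm ν p q g := by
  unfold lorentzNorm
  split_ifs
  · exact iSup_mono fun s => by grw [h s s.2]
  · refine ENNReal.rpow_le_rpow ?_ (by positivity)
    gcongr ENNReal.ofReal p * ?_
    refine setLIntegral_mono' measurableSet_Ioi fun s hs => ?_
    gcongr
    exact h s hs

theorem lorentzNorm_mono_measure (hp : 0 ≤ p) {q : ℝ≥0∞} (h : μ ≤ ν) :
    lorentzNorm μ p q f ≤ lorentzNorm ν p q f :=
  lorentzNorm_le_of_distribFn_le hp fun _ _ => h _

theorem lorentzNorm_mono_ae (hp : 0 ≤ p) {q : ℝ≥0∞} (h : ∀ᵐ x ∂μ, |f x| ≤ |g x|) :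
    lorentzNorm μ p q f ≤ lorentzNorm μ p q g :=
  lorentzNorm_le_of_distribFn_le hp fun _ _ => measure_mono_ae <|
    h.mono fun _ hfg hs => lt_of_lt_of_le hs hfg

theorem lorentzNorm_restrict_of_support_subset (hp : 0 ≤ p) {q : ℝ≥0∞} {A : Set α}
    (hA : MeasurableSet A) (hf : Function.support f ⊆ A) :
    lorentzNorm (μ.restrict A) p q f = lorentzNorm μ p q f := by
  refine le_antisymm (lorentzNorm_mono_measure hp Measure.restrict_le_self)
    (lorentzNorm_le_of_distribFn_le hp fun s hs => ?_)
  rw [distribFn, distribFn, Measure.restrict_apply' hA]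
  exact measure_mono fun x hx => ⟨hx, hf (abs_pos.1 (hs.trans hx))⟩

theorem lorentzNorm_ofReal (hq : 0 ≤ q) :
    lorentzNorm μ p (ENNReal.ofReal q) f =
      (ENNReal.ofReal p * ∫⁻ s in Ioi (0 : ℝ),
        ENNReal.ofReal (s ^ (q - 1)) * distribFn μ f s ^ (q / p)) ^ (1 / q) := by
  rw [lorentzNorm, if_neg ENNReal.ofReal_ne_top, ENNReal.toReal_ofReal hq]

theorem lorentzNorm_const_mul (hq : 0 < q) {c : ℝ} (hc : 0 < c) :
    lorentzNorm μ p (ENNReal.ofReal q) (fun x => c * f x) =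
      ENNReal.ofReal c * lorentzNorm μ p (ENNReal.ofReal q) f := by
  have hdistrib : ∀ s, distribFn μ (fun x => c * f x) (c * s) = distribFn μ f s := fun s => by
    simp only [distribFn, abs_mul, abs_of_pos hc, mul_lt_mul_iff_right₀ hc]
  have hweight : ∀ s ∈ Ioi (0 : ℝ), ENNReal.ofReal c * (ENNReal.ofReal ((c * s) ^ (q - 1)) *
      distribFn μ (fun x => c * f x) (c * s) ^ (q / p)) =
      ENNReal.ofReal (c ^ q) *
        (ENNReal.ofReal (s ^ (q - 1)) * distribFn μ f s ^ (q / p)) := fun s (hs : 0 < s) => by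
    rw [hdistrib, ← mul_assoc, ← mul_assoc, ← ENNReal.ofReal_mul hc.le,
      ← ENNReal.ofReal_mul (by positivity), Real.mul_rpow hc.le hs.le, ← mul_assoc,
      Real.rpow_sub_one hc.ne', mul_div_cancel₀ _ hc.ne']
  have himage : Ioi (0 : ℝ) = (c * ·) '' Ioi 0 := by rw [image_mul_left_Ioi hc, mul_zero]
  rw [lorentzNorm_ofReal hq.le, lorentzNorm_ofReal hq.le, himage,
    setLIntegral_image_const_mul hc measurableSet_Ioi, ← himage,
    setLIntegral_congr_fun measurableSet_Ioi hweight,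
    lintegral_const_mul' _ _ ENNReal.ofReal_ne_top, mul_left_comm,
    ENNReal.mul_rpow_of_nonneg _ _ (by positivity), one_div,
    ENNReal.ofReal_rpow_of_nonneg (by positivity) (by positivity), Real.rpow_rpow_inv hc.le hq.ne']

theorem lorentzNorm_ne_top_of_bounded (hp : 0 < p) (hq : 0 < q) {M : ℝ} (hM : ∀ x, |f x| ≤ M)
    (hf : μ (Function.support f) ≠ ⊤) : lorentzNorm μ p (ENNReal.ofReal q) f ≠ ⊤ := by
  rw [lorentzNorm_ofReal hq.le]
  refine ENNReal.rpow_ne_top_of_nonneg (by positivity)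
    (ENNReal.mul_ne_top ENNReal.ofReal_ne_top ?_)
  set C : ℝ≥0∞ := μ (Function.support f) ^ (q / p)
  have hC : C ≠ ⊤ := ENNReal.rpow_ne_top_of_nonneg (by positivity) hf
  have hint : IntegrableOn (fun s : ℝ => s ^ (q - 1)) (Ioc 0 M) :=
    (intervalIntegral.intervalIntegrable_rpow' (by linarith)).1
  refine ne_top_of_le_ne_top
    (ENNReal.mul_ne_top hint.lintegral_lt_top.ne hC) ?_
  rw [← lintegral_mul_const' _ _ hC]
  have hbound : ∀ s ∈ Ioi (0 : ℝ), ENNReal.ofReal (s ^ (q - 1)) * distribFn μ f s ^ (q / p) ≤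
      (Ioc 0 M).indicator (fun s => ENNReal.ofReal (s ^ (q - 1)) * C) s := by
    intro s (hs : 0 < s)
    by_cases hsM : s ≤ M
    · rw [indicator_of_mem (show s ∈ Ioc 0 M from ⟨hs, hsM⟩)]
      gcongr
      exact ENNReal.rpow_le_rpow
        (measure_mono fun x (hx : s < |f x|) => abs_pos.1 (hs.trans hx)) (by positivity)
    · have hempty : distribFn μ f s = 0 := by
        simp [distribFn, fun x => (hM x).trans (not_le.1 hsM).le, not_lt.2]
      rw [hempty, ENNReal.zero_rpow_of_pos (by positivity), mul_zero]
      exact zero_le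
  calc _ ≤ ∫⁻ s in Ioi (0 : ℝ), (Ioc 0 M).indicator (fun s => ENNReal.ofReal (s ^ (q - 1)) * C) s :=
        setLIntegral_mono' measurableSet_Ioi hbound
    _ ≤ _ := (setLIntegral_le_lintegral _ _).trans_eq (lintegral_indicator measurableSet_Ioc _)

theorem sum_distribFn_restrict_le {ι : Type*} (s : Finset ι) {A : ι → Set α}
    (hA : ∀ i, MeasurableSet (A i)) (hd : Pairwise (Function.onFun Disjoint A)) (σ : ℝ) :
    ∑ i ∈ s, distribFn (μ.restrict (A i)) f σ ≤ distribFn μ f σ := by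
  have h := sum_measure_le_measure_univ (μ := μ.restrict {x | σ < |f x|}) (s := s) (t := A)
    (fun i _ => (hA i).nullMeasurableSet) (fun i _ j _ hij => (hd hij).aedisjoint)
  simpa only [distribFn, Measure.restrict_apply (hA _), Measure.restrict_apply' (hA _),
    Measure.restrict_apply_univ, inter_comm] using h

theorem sum_lorentzNorm_restrict_rpow_le {ι : Type*} (hq : 0 < q) (hqp : q ≤ p) (s : Finset ι)
    {A : ι → Set α} (hA : ∀ i, MeasurableSet (A i))
    (hd : Pairwise (Function.onFun Disjoint A)) :
    ∑ i ∈ s, lorentzNorm (μ.restrict (A i)) p (ENNReal.ofReal q) f ^ p ≤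
      lorentzNorm μ p (ENNReal.ofReal q) f ^ p := by
  have hp : 0 < p := hq.trans_le hqp
  have hpq : 0 ≤ p / q := by positivity
  have hnorm : ∀ ν : Measure α, lorentzNorm ν p (ENNReal.ofReal q) f ^ p =
      ENNReal.ofReal p ^ (p / q) * (∫⁻ σ in Ioi (0 : ℝ),
        ENNReal.ofReal (σ ^ (q - 1)) * distribFn ν f σ ^ (q / p)) ^ (p / q) := fun ν => by
    rw [lorentzNorm_ofReal hq.le, ← ENNReal.rpow_mul, one_div_mul_eq_div,
      ENNReal.mul_rpow_of_nonneg _ _ hpq]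
  have hcancel : ∀ w m : ℝ≥0∞, (w * m ^ (q / p)) ^ (p / q) = w ^ (p / q) * m := fun w m => by
    rw [ENNReal.mul_rpow_of_nonneg _ _ hpq, ← inv_div p q,
      ENNReal.rpow_inv_rpow (by positivity)]
  simp only [hnorm, ← Finset.mul_sum]
  gcongr
  refine (sum_lintegral_rpow_le _ s _ ((one_le_div hq).2 hqp)).trans ?_
  gcongr with σ
  rw [one_div, ENNReal.rpow_inv_le_iff (by positivity)]
  simp only [hcancel, ← Finset.mul_sum]
  gcongr
  exact sum_distribFn_restrict_le s hA hd σ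

end LorentzNorm

section Truncation

theorem norm_fderiv_comp_le_of_lipschitzWith {𝕜 E F G : Type*} [NontriviallyNormedField 𝕜]
    [NormedAddCommGroup E] [NormedSpace 𝕜 E] [NormedAddCommGroup F] [NormedSpace 𝕜 F]
    [NormedAddCommGroup G] [NormedSpace 𝕜 G] {ψ : F → G} {K : ℝ≥0} (hψ : LipschitzWith K ψ)
    {φ : E → F} {x : E} (hφ : DifferentiableAt 𝕜 φ x) :
    ‖fderiv 𝕜 (fun y => ψ (φ y)) x‖ ≤ K * ‖fderiv 𝕜 φ x‖ := by
  have approx : ∀ ε > 0, ‖fderiv 𝕜 (fun y => ψ (φ y)) x‖ ≤ K * (‖fderiv 𝕜 φ x‖ + ε) := by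
    intro ε hε
    refine norm_fderiv_le_of_lip' 𝕜 (by positivity) ?_
    filter_upwards [hφ.hasFDerivAt.isLittleO.def hε] with y hy
    have hφy : ‖φ y - φ x‖ ≤ (‖fderiv 𝕜 φ x‖ + ε) * ‖y - x‖ :=
      calc ‖φ y - φ x‖ ≤ ‖fderiv 𝕜 φ x (y - x)‖ + ‖φ y - φ x - fderiv 𝕜 φ x (y - x)‖ :=
            norm_le_insert' _ _
        _ ≤ ‖fderiv 𝕜 φ x‖ * ‖y - x‖ + ε * ‖y - x‖ :=
            add_le_add (ContinuousLinearMap.le_opNorm _ _) hy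
        _ = _ := (add_mul _ _ _).symm
    grw [hψ.norm_sub_le, hφy, mul_assoc]
  refine ge_of_tendsto (x := 𝓝[>] (0 : ℝ)) ?_ (eventually_mem_nhdsWithin.mono approx)
  exact tendsto_nhdsWithin_of_tendsto_nhds <|
    Continuous.tendsto' (by fun_prop) _ _ (by rw [add_zero])

/-- The superlevel set `M_t = {|φ| > t}` of a function `φ` on `Ω`. -/
def superlevelSet {α : Type*} (Ω : Set α) (φ : α → ℝ) (t : ℝ) : Set α :=
  {x | x ∈ Ω ∧ t < |φ x|}

/-- The layer `{r < |φ| < R}` between two superlevel sets. -/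
def levelLayer {α : Type*} (φ : α → ℝ) (r R : ℝ) : Set α :=
  (fun x => |φ x|) ⁻¹' Ioo r R

theorem measurableSet_levelLayer {α : Type*} [MeasurableSpace α] {φ : α → ℝ} (hφ : Measurable φ)
    (r R : ℝ) : MeasurableSet (levelLayer φ r R) :=
  hφ.norm measurableSet_Ioo

theorem pairwise_disjoint_levelLayer_zpow {α : Type*} (φ : α → ℝ) {a t : ℝ} (ha : 1 < a)
    (ht : 0 ≤ t) :
    Pairwise (Function.onFun Disjoint fun k : ℤ =>
      levelLayer φ (a ^ k * t) (a * (a ^ k * t))) := by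
  have hmono : Monotone fun k : ℤ => a ^ k * t := (zpow_right_mono₀ ha.le).mul_const ht
  intro i j hij
  have h := hmono.pairwise_disjoint_on_Ioo_succ hij
  simp only [Function.onFun, Order.succ_eq_add_one, zpow_add_one₀ (one_pos.trans ha).ne',
    mul_comm _ a, mul_assoc] at h
  exact h.preimage _

/-- The piecewise linear cutoff in `|y|` which rises from `0` at `|y| = α` to `1` at `|y| = β`
(for `α < β`); composed with `φ` it is the test function for the conductor between two
superlevel sets of `φ`. -/
noncomputable def levelCutoff (α β y : ℝ) : ℝ :=
  max 0 (min 1 ((|y| - α) / (β - α)))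

variable {α β r R : ℝ}

theorem levelCutoff_eq_zero (hαβ : α < β) {y : ℝ} (hy : |y| ≤ α) : levelCutoff α β y = 0 :=
  max_eq_left <| (min_le_right _ _).trans <|
    div_nonpos_of_nonpos_of_nonneg (sub_nonpos.2 hy) (sub_nonneg.2 hαβ.le)

theorem levelCutoff_eq_one (hαβ : α < β) {y : ℝ} (hy : β ≤ |y|) : levelCutoff α β y = 1 := by
  have h : 1 ≤ (|y| - α) / (β - α) := (one_le_div (sub_pos.2 hαβ)).2 (by linarith)
  rw [levelCutoff, min_eq_left h, max_eq_right zero_le_one]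

theorem lipschitzWith_levelCutoff (hαβ : α < β) :
    LipschitzWith (β - α)⁻¹.toNNReal (levelCutoff α β) := by
  have hd : 0 < β - α := sub_pos.2 hαβ
  have hlin : LipschitzWith (β - α)⁻¹.toNNReal fun y : ℝ => (|y| - α) / (β - α) :=
    LipschitzWith.of_dist_le_mul fun y z => by
      rw [Real.coe_toNNReal _ (inv_nonneg.2 hd.le), Real.dist_eq, Real.dist_eq, ← sub_div,
        sub_sub_sub_cancel_right, abs_div, abs_of_pos hd, div_eq_inv_mul]
      refine mul_le_mul_of_nonneg_left ?_ (inv_nonneg.2 hd.le)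
      exact abs_abs_sub_abs_le_abs_sub y z
  exact (hlin.const_min 1).const_max 0

theorem support_fderiv_levelCutoff_comp_subset {E : Type*} [NormedAddCommGroup E]
    [NormedSpace ℝ E] {φ : E → ℝ} (hφ : Continuous φ) (hrα : r < α) (hαβ : α < β) (hβR : β < R) :
    Function.support (fderiv ℝ fun x => levelCutoff α β (φ x)) ⊆ levelLayer φ r R := by
  refine fun x hx => ⟨lt_of_not_ge fun h => hx ?_, lt_of_not_ge fun h => hx ?_⟩
  · have hzero : (fun y => levelCutoff α β (φ y)) =ᶠ[𝓝 x] fun _ => 0 :=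
      (hφ.abs.continuousAt.eventually_lt_const (h.trans_lt hrα)).mono fun _ hy =>
        levelCutoff_eq_zero hαβ (le_of_lt hy)
    rw [hzero.fderiv_eq, fderiv_fun_const, Pi.zero_apply]
  · have hone : (fun y => levelCutoff α β (φ y)) =ᶠ[𝓝 x] fun _ => 1 :=
      (hφ.abs.continuousAt.eventually_const_lt (hβR.trans_le h)).mono fun _ hy =>
        levelCutoff_eq_one hαβ (le_of_lt hy)
    rw [hone.fderiv_eq, fderiv_fun_const, Pi.zero_apply]

end Truncation

section Conductor

variable {n : ℕ} {p q a : ℝ} {Ω : Set (Fin n → ℝ)} {φ : (Fin n → ℝ) → ℝ} {L : ℝ≥0}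
  (hL : LipschitzWith L φ) (hc : HasCompactSupport φ)

include hL hc

theorem lorentzNorm_fderiv_ne_top (hp : 0 < p) (hq : 0 < q) :
    lorentzNorm (volume.restrict Ω) p (ENNReal.ofReal q) (fun x => ‖fderiv ℝ φ x‖) ≠ ⊤ := by
  refine lorentzNorm_ne_top_of_bounded hp hq (M := L) (fun x => ?_) ?_
  · rw [abs_norm]
    exact norm_fderiv_le_of_lipschitz ℝ hL
  · refine ne_top_of_le_ne_top hc.isCompact.measure_lt_top.ne
      ((Measure.restrict_apply_le _ _).trans (measure_mono ?_))
    exact (Function.support_comp_subset norm_zero _).trans (support_fderiv_subset ℝ)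

variable (hsupp : tsupport φ ⊆ Ω)

include hsupp

theorem levelCutoff_comp_mem_admissible {α β r R : ℝ} (hr : 0 ≤ r) (hrα : r < α) (hαβ : α < β)
    (hβR : β < R) :
    (fun x => levelCutoff α β (φ x)) ∈
      admissible (closure (superlevelSet Ω φ R)) (superlevelSet Ω φ r) := by
  have hφ : Continuous fun x => |φ x| := hL.continuous.abs
  refine ⟨⟨_, (lipschitzWith_levelCutoff hαβ).comp hL⟩, ?_, fun x hx => ?_, ?_⟩
  · refine hc.comp_left (g := levelCutoff α β) (levelCutoff_eq_zero hαβ ?_)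
    rw [abs_zero]
    exact hr.trans hrα.le
  · have hlevel : tsupport (fun x => levelCutoff α β (φ x)) ⊆ {x | α ≤ |φ x|} :=
      closure_minimal (fun y hy => le_of_not_ge fun h => hy (levelCutoff_eq_zero hαβ h))
        (isClosed_le continuous_const hφ)
    have hrx : r < |φ x| := hrα.trans_le (hlevel hx)
    exact ⟨hsupp (subset_tsupport _ (abs_pos.1 (hr.trans_lt hrx))), hrx⟩
  · calc closure (superlevelSet Ω φ R) ⊆ {x | R ≤ |φ x|} :=
          closure_minimal (fun _ hx => hx.2.le) (isClosed_le continuous_const hφ)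
      _ ⊆ {x | β < |φ x|} := fun _ hx => hβR.trans_le hx
      _ ⊆ interior {x | 1 ≤ levelCutoff α β (φ x)} :=
          interior_maximal (fun _ hx => (levelCutoff_eq_one hαβ (le_of_lt hx)).ge)
            (isOpen_lt continuous_const hφ)

theorem capacitance_superlevelSet_le_of_lt (hp : 0 ≤ p) (hq : 0 < q) {α β r R : ℝ} (hr : 0 ≤ r)
    (hrα : r < α) (hαβ : α < β) (hβR : β < R) :
    capacitance n p (ENNReal.ofReal q) (closure (superlevelSet Ω φ R)) (superlevelSet Ω φ r) ≤
      (ENNReal.ofReal (β - α)⁻¹ *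
        lorentzNorm ((volume.restrict Ω).restrict (levelLayer φ r R)) p (ENNReal.ofReal q)
          (fun x => ‖fderiv ℝ φ x‖)) ^ p := by
  have hK : 0 < (β - α)⁻¹ := inv_pos.2 (sub_pos.2 hαβ)
  have hfderiv : ∀ᵐ x, ‖fderiv ℝ (fun y => levelCutoff α β (φ y)) x‖ ≤
      (β - α)⁻¹ * ‖fderiv ℝ φ x‖ := by
    filter_upwards [hL.ae_differentiableAt] with x hx
    simpa only [Real.coe_toNNReal _ hK.le] using
      norm_fderiv_comp_le_of_lipschitzWith (lipschitzWith_levelCutoff hαβ) hx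
  refine (iInf₂_le _ (levelCutoff_comp_mem_admissible hL hc hsupp hr hrα hαβ hβR)).trans
    (ENNReal.rpow_le_rpow ?_ hp)
  set u := fun x => levelCutoff α β (φ x)
  calc lorentzNorm (volume.restrict (superlevelSet Ω φ r)) p (ENNReal.ofReal q)
        (fun x => ‖fderiv ℝ u x‖)
      ≤ lorentzNorm (volume.restrict Ω) p (ENNReal.ofReal q) (fun x => ‖fderiv ℝ u x‖) :=
        lorentzNorm_mono_measure hp (Measure.restrict_mono (fun _ hx => hx.1) le_rfl)
    _ = lorentzNorm ((volume.restrict Ω).restrict (levelLayer φ r R)) p (ENNReal.ofReal q)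
        (fun x => ‖fderiv ℝ u x‖) := by
        refine (lorentzNorm_restrict_of_support_subset hp
          (measurableSet_levelLayer hL.continuous.measurable r R) ?_).symm
        exact (Function.support_comp_subset norm_zero _).trans
          (support_fderiv_levelCutoff_comp_subset hL.continuous hrα hαβ hβR)
    _ ≤ lorentzNorm ((volume.restrict Ω).restrict (levelLayer φ r R)) p (ENNReal.ofReal q)
        (fun x => (β - α)⁻¹ * ‖fderiv ℝ φ x‖) := by
        refine lorentzNorm_mono_ae hp (ae_restrict_of_ae (ae_restrict_of_ae ?_))
        filter_upwards [hfderiv] with x hx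
        exact abs_le_abs_of_nonneg (norm_nonneg _) hx
    _ = _ := lorentzNorm_const_mul hq hK

theorem capacitance_superlevelSet_le (hp : 0 < p) (hq : 0 < q) {r R : ℝ} (hr : 0 ≤ r)
    (hrR : r < R) :
    capacitance n p (ENNReal.ofReal q) (closure (superlevelSet Ω φ R)) (superlevelSet Ω φ r) ≤
      (ENNReal.ofReal (R - r)⁻¹ *
        lorentzNorm ((volume.restrict Ω).restrict (levelLayer φ r R)) p (ENNReal.ofReal q)
          (fun x => ‖fderiv ℝ φ x‖)) ^ p := by
  set N := lorentzNorm ((volume.restrict Ω).restrict (levelLayer φ r R)) p (ENNReal.ofReal q)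
    (fun x => ‖fderiv ℝ φ x‖)
  have hd : 0 < R - r := sub_pos.2 hrR
  have hN : N ≠ ⊤ := ne_top_of_le_ne_top (lorentzNorm_fderiv_ne_top hL hc hp hq)
    (lorentzNorm_mono_measure hp.le Measure.restrict_le_self)
  have hlim : Tendsto (fun d => (ENNReal.ofReal d⁻¹ * N) ^ p) (𝓝[<] (R - r))
      (𝓝 ((ENNReal.ofReal (R - r)⁻¹ * N) ^ p)) :=
    tendsto_nhdsWithin_of_tendsto_nhds <| (ENNReal.continuous_rpow_const.tendsto _).comp <|
      ENNReal.Tendsto.mul_const (ENNReal.tendsto_ofReal (tendsto_inv₀ hd.ne')) (Or.inr hN)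
  -- A ramp of any length `d < R - r` fits strictly inside the layer; let `d` increase to `R - r`.
  refine ge_of_tendsto hlim ?_
  filter_upwards [Ioo_mem_nhdsLT hd] with d hdR
  set α := r + (R - r - d) / 2 with hα
  have h := capacitance_superlevelSet_le_of_lt hL hc hsupp hp.le hq hr
    (α := α) (β := α + d) (R := R) (by linarith [hdR.2]) (by linarith [hdR.1]) (by linarith [hdR.2])
  rwa [add_sub_cancel_left] at h

theorem rpow_mul_capacitance_superlevelSet_le (hp : 0 < p) (hq : 0 < q) (ha : 1 < a) {t : ℝ}
    (ht : 0 < t) :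
    ENNReal.ofReal (t ^ p) * capacitance n p (ENNReal.ofReal q)
        (closure (superlevelSet Ω φ (a * t))) (superlevelSet Ω φ t) ≤
      ENNReal.ofReal ((a - 1) ^ (-p)) *
        lorentzNorm ((volume.restrict Ω).restrict (levelLayer φ t (a * t))) p (ENNReal.ofReal q)
          (fun x => ‖fderiv ℝ φ x‖) ^ p := by
  have ha1 : 0 < a - 1 := sub_pos.2 ha
  have hconst : t * (a * t - t)⁻¹ = (a - 1)⁻¹ := by
    rw [← sub_one_mul, mul_inv_rev, mul_inv_cancel_left₀ ht.ne']
  grw [capacitance_superlevelSet_le hL hc hsupp hp hq ht.le (lt_mul_of_one_lt_left ht ha)]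
  rw [← ENNReal.ofReal_rpow_of_pos ht, ← ENNReal.mul_rpow_of_nonneg _ _ hp.le, ← mul_assoc,
    ← ENNReal.ofReal_mul ht.le, hconst, ENNReal.mul_rpow_of_nonneg _ _ hp.le,
    ENNReal.ofReal_rpow_of_pos (inv_pos.2 ha1), Real.inv_rpow ha1.le, Real.rpow_neg ha1.le]

theorem sum_rpow_mul_capacitance_superlevelSet_le (hq : 0 < q) (hqp : q ≤ p) (ha : 1 < a) {t : ℝ}
    (ht : 0 < t) (s : Finset ℤ) :
    ∑ k ∈ s, ENNReal.ofReal ((a ^ k * t) ^ p) * capacitance n p (ENNReal.ofReal q)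
        (closure (superlevelSet Ω φ (a * (a ^ k * t)))) (superlevelSet Ω φ (a ^ k * t)) ≤
      ENNReal.ofReal ((a - 1) ^ (-p)) *
        lorentzNorm (volume.restrict Ω) p (ENNReal.ofReal q) (fun x => ‖fderiv ℝ φ x‖) ^ p := by
  refine (Finset.sum_le_sum fun k _ => rpow_mul_capacitance_superlevelSet_le hL hc hsupp
    (hq.trans_le hqp) hq ha (mul_pos (zpow_pos (one_pos.trans ha) k) ht)).trans ?_
  rw [← Finset.mul_sum]
  gcongr
  exact sum_lorentzNorm_restrict_rpow_le hq hqp s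
    (fun _ => measurableSet_levelLayer hL.continuous.measurable _ _)
    (pairwise_disjoint_levelLayer_zpow φ ha ht.le)

theorem sum_rpow_mul_capacitance_toReal_le (hq : 0 < q) (hqp : q ≤ p) (ha : 1 < a) {t : ℝ}
    (ht : 0 < t) (s : Finset ℤ) :
    ∑ k ∈ s, (a ^ k * t) ^ p * (capacitance n p (ENNReal.ofReal q)
        (closure (superlevelSet Ω φ (a * (a ^ k * t)))) (superlevelSet Ω φ (a ^ k * t))).toReal ≤
      (a - 1) ^ (-p) * (lorentzNorm (volume.restrict Ω) p (ENNReal.ofReal q)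
        (fun x => ‖fderiv ℝ φ x‖)).toReal ^ p := by
  have hp : 0 < p := hq.trans_le hqp
  have hsum := sum_rpow_mul_capacitance_superlevelSet_le hL hc hsupp hq hqp ha ht s
  have htop := ENNReal.mul_ne_top (ENNReal.ofReal_ne_top (r := (a - 1) ^ (-p)))
    (ENNReal.rpow_ne_top_of_nonneg hp.le (lorentzNorm_fderiv_ne_top (Ω := Ω) hL hc hp hq))
  have hr : ∀ k : ℤ, 0 ≤ (a ^ k * t) ^ p := fun k =>
    Real.rpow_nonneg (mul_pos (zpow_pos (one_pos.trans ha) k) ht).le p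
  have h := ENNReal.toReal_mono htop hsum
  rw [ENNReal.toReal_sum (ENNReal.sum_ne_top.1 (ne_top_of_le_ne_top htop hsum))] at h
  simpa only [ENNReal.toReal_mul, ENNReal.toReal_ofReal (hr _), ← ENNReal.toReal_rpow,
    ENNReal.toReal_ofReal (Real.rpow_nonneg (sub_pos.2 ha).le _)] using h

theorem conductor_inequality_Phi_q_le_p_general (hq : 0 < q) (hqp : q ≤ p) (ha : 1 < a) {Φ : ℝ → ℝ}
    (hnonneg : ∀ x ∈ Ici (0 : ℝ), 0 ≤ Φ x)
    (hadd : ∀ x ∈ Ici (0 : ℝ), ∀ y ∈ Ici (0 : ℝ), Φ x + Φ y ≤ Φ (x + y)) :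
    ∫⁻ t in Ioi (0 : ℝ), ENNReal.ofReal (Φ (t ^ p * (capacitance n p (ENNReal.ofReal q)
        (closure (superlevelSet Ω φ (a * t))) (superlevelSet Ω φ t)).toReal) / t) ≤
      ENNReal.ofReal (Φ ((a - 1) ^ (-p) * (lorentzNorm (volume.restrict Ω) p (ENNReal.ofReal q)
        (fun x => ‖fderiv ℝ φ x‖)).toReal ^ p) * Real.log a) := by
  set F : ℝ → ℝ := fun t => t ^ p * (capacitance n p (ENNReal.ofReal q)
    (closure (superlevelSet Ω φ (a * t))) (superlevelSet Ω φ t)).toReal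
  have hF : ∀ t, 0 < t → 0 ≤ F t := fun t ht => by positivity
  refine lintegral_ofReal_div_le_of_sum_zpow_le ha (G := fun t => Φ (F t))
    (fun t ht => hnonneg _ (hF t ht)) fun t ht s => ?_
  have hFk : ∀ k : ℤ, 0 ≤ F (a ^ k * t) := fun k =>
    hF _ (mul_pos (zpow_pos (one_pos.trans ha) k) ht)
  have hsum := sum_rpow_mul_capacitance_toReal_le hL hc hsupp hq hqp ha ht s
  have hsum0 : 0 ≤ ∑ k ∈ s, F (a ^ k * t) := Finset.sum_nonneg fun k _ => hFk k
  calc ∑ k ∈ s, Φ (F (a ^ k * t)) ≤ Φ (∑ k ∈ s, F (a ^ k * t)) :=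
        sum_map_le_map_sum_of_superadditive hnonneg hadd s hFk
    _ ≤ _ := monotoneOn_of_superadditive hnonneg hadd hsum0 (hsum0.trans hsum) hsum

end Conductor

/-- Conductor inequality with a convex function `Φ`, case `1 ≤ q ≤ p`:
`∫_0^∞ Φ(t^p cap_{p,q}(closure M_{at}, M_t)) dt/t ≤ Φ(c(a,p,q) ‖∇φ‖_{L^{p,q}}^p) · log a`. -/
theorem conductor_inequality_Phi_q_le_p {n : ℕ} (p q : ℝ)
    (hp : 1 < p) (hq : 1 ≤ q) (hqp : q ≤ p)
    {Ω : Set (Fin n → ℝ)} (hΩ : IsOpen Ω)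
    (a : ℝ) (ha : 1 < a) :
    ∃ c : ℝ, 0 < c ∧
      ∀ Φ : ℝ → ℝ, MonotoneOn Φ (Ici 0) → ConvexOn ℝ (Ici 0) Φ → Φ 0 = 0 →
        (∀ x ∈ Ici (0 : ℝ), 0 ≤ Φ x) →
      ∀ φ : (Fin n → ℝ) → ℝ, (∃ L, LipschitzWith L φ) → HasCompactSupport φ →
        tsupport φ ⊆ Ω →
        (∫⁻ t in Ioi (0 : ℝ),
            ENNReal.ofReal
              (Φ (t ^ p *
                (capacitance n p (ENNReal.ofReal q)
                  (closure {x | x ∈ Ω ∧ a * t < |φ x|})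
                  {x | x ∈ Ω ∧ t < |φ x|}).toReal) / t)) ≤
          ENNReal.ofReal
            (Φ (c * (lorentzNorm (volume.restrict Ω) p (ENNReal.ofReal q)
                  (fun x => ‖fderiv ℝ φ x‖)).toReal ^ p) * Real.log a) := by
  refine ⟨(a - 1) ^ (-p), Real.rpow_pos_of_pos (sub_pos.2 ha) _, ?_⟩
  rintro Φ - hconv hΦ0 hnonneg φ ⟨L, hL⟩ hc hsupp
  exact conductor_inequality_Phi_q_le_p_general hL hc hsupp (one_pos.trans_le hq) hqp ha hnonneg
    (add_le_map_add_of_convexOn hconv hΦ0)
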